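/- Let E ∈ GL(m,k) and F ∈ GL(n,k), and assume B(E,F) ≠ 0. Let α : B(E,F) → B(E) ⊗ B(E,F) be the unique algebra homomorphism with α(z_{ij}) = Σ_{k=1}^m a_{ik} ⊗ z_{kj}. Then the linear map κ_l : B(E,F) ⊗ B(E,F) → B(E) ⊗ B(E,F) defined by κ_l = (id_{B(E)} ⊗ m_Z) ∘ (α ⊗ id_{B(E,F)}), where m_Z is the multiplication of B(E,F), is bijective. -/

import Mathlib

open scoped TensorProduct
open Matrix

noncomputable section

variable (k : Type) [Field k]

/-- The matrix of free generators of the free algebra on `Fin m × Fin n`. -/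
def gens (m n : ℕ) : Matrix (Fin m) (Fin n) (FreeAlgebra k (Fin m × Fin n)) :=
  Matrix.of fun i j => FreeAlgebra.ι k (i, j)

/-- A scalar matrix viewed as a matrix over a `k`-algebra. -/
def liftMat {A : Type} [Semiring A] [Algebra k A] {p q : ℕ}
    (M : Matrix (Fin p) (Fin q) k) : Matrix (Fin p) (Fin q) A :=
  M.map (algebraMap k A)

/-- The defining relations of the algebra `B(E,F)`:
`F⁻¹ * ᵀz * E * z = 1` and `z * F⁻¹ * ᵀz * E = 1`. -/
inductive BRel {m n : ℕ} (E : Matrix (Fin m) (Fin m) k) (F : Matrix (Fin n) (Fin n) k) :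
    FreeAlgebra k (Fin m × Fin n) → FreeAlgebra k (Fin m × Fin n) → Prop
  | left (i j : Fin n) : BRel E F
      ((liftMat k (A := FreeAlgebra k (Fin m × Fin n)) F⁻¹ * (gens k m n)ᵀ * liftMat k (A := FreeAlgebra k (Fin m × Fin n)) E * gens k m n :
          Matrix (Fin n) (Fin n) (FreeAlgebra k (Fin m × Fin n))) i j)
      ((1 : Matrix (Fin n) (Fin n) (FreeAlgebra k (Fin m × Fin n))) i j)
  | right (i j : Fin m) : BRel E F
      ((gens k m n * liftMat k (A := FreeAlgebra k (Fin m × Fin n)) F⁻¹ * (gens k m n)ᵀ * liftMat k (A := FreeAlgebra k (Fin m × Fin n)) E :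
          Matrix (Fin m) (Fin m) (FreeAlgebra k (Fin m × Fin n))) i j)
      ((1 : Matrix (Fin m) (Fin m) (FreeAlgebra k (Fin m × Fin n))) i j)

/-- The algebra `B(E,F)`.  The Hopf algebra `B(E)` is `BB k E E`. -/
abbrev BB {m n : ℕ} (E : Matrix (Fin m) (Fin m) k) (F : Matrix (Fin n) (Fin n) k) :=
  RingQuot (BRel k E F)

/-- The matrix of generators of `B(E,F)`. -/
def ZMat {m n : ℕ} (E : Matrix (Fin m) (Fin m) k) (F : Matrix (Fin n) (Fin n) k) :
    Matrix (Fin m) (Fin n) (BB k E F) :=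
  Matrix.of fun i j => RingQuot.mkAlgHom k (BRel k E F) (gens k m n i j)

/-!
Write `z` for the generating matrix of `B(E,F)` and `w = F⁻¹ ᵀz E` for its inverse. The `B(E,F)`
form a cogroupoid: matrices satisfying the `(E,F)`- and `(F,G)`-relations with commuting entries
multiply to one satisfying the `(E,G)`-relations, and `w` satisfies the `(F,E)`-relations over
the opposite algebra. Hence `a i j ↦ ∑ p, z i p ⊗ w p j` defines an algebra homomorphism
`β : B(E) → B(E,F) ⊗ B(E,F)ᵐᵒᵖ`, and `a ⊗ y ↦ β(a) (1 ⊗ y)` (second factor multiplied in `B(E,F)`)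
inverts `κₗ`. Multiplication of `B(E,F)` is not an algebra homomorphism, so to check this on
generators one describes both maps as orbit maps of `1` under actions; compatibility of the
actions with multiplication is then inherited by products.

The argument uses `B(E)` and the second `B(E,F)` only through their generating matrices, so it
gives `B(E,F) ⊗ B(G,F) ≅ B(E,G) ⊗ B(G,F)` for every invertible `G`.
-/

section Transpose

variable {l m n S : Type*} [Fintype m] [NonUnitalNonAssocSemiring S]

theorem transpose_mul_of_commute {X : Matrix l m S} {Y : Matrix m n S}
    (hXY : ∀ i j p q, Commute (X i j) (Y p q)) : (X * Y)ᵀ = Yᵀ * Xᵀ := by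
  ext i j
  simp only [Matrix.transpose_apply, Matrix.mul_apply, (hXY _ _ _ _).eq]

theorem transpose_map_op_mul (M : Matrix l m S) (N : Matrix m n S) :
    ((M * N).map MulOpposite.op)ᵀ = (N.map MulOpposite.op)ᵀ * (M.map MulOpposite.op)ᵀ := by
  ext i j
  simp [Matrix.mul_apply, Finset.op_sum]

end Transpose

section GaloisMap

open MulOpposite Algebra.TensorProduct

variable {R A Y Z : Type*} [CommSemiring R] [Semiring A] [Algebra R A] [Semiring Y] [Algebra R Y]
  [Semiring Z] [Algebra R Z]

/-- The left Galois map `Z ⊗ Y → A ⊗ Y`, `z ⊗ y ↦ α(z) (1 ⊗ y)`, of an algebra homomorphism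
`α : Z → A ⊗ Y`. The case `Y = Z` with `α` a coaction is the usual one. -/
def leftGaloisMap (α : Z →ₐ[R] A ⊗[R] Y) : Z ⊗[R] Y →ₗ[R] A ⊗[R] Y :=
  LinearMap.lTensor A (LinearMap.mul' R Y) ∘ₗ (TensorProduct.assoc R A Y Y).toLinearMap ∘ₗ
    LinearMap.rTensor Y α.toLinearMap

theorem leftGaloisMap_tmul (α : Z →ₐ[R] A ⊗[R] Y) (z : Z) (y : Y) :
    leftGaloisMap α (z ⊗ₜ y) = α z * 1 ⊗ₜ y := by
  simp only [leftGaloisMap, LinearMap.comp_apply, LinearMap.rTensor_tmul,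
    AlgHom.toLinearMap_apply, LinearEquiv.coe_coe]
  induction α z using TensorProduct.induction_on with
  | zero => simp
  | tmul a y' => simp
  | add s t hs ht => rw [TensorProduct.add_tmul, map_add, map_add, hs, ht, add_mul]

/-- The action of `Z ⊗ Yᵐᵒᵖ` on `A ⊗ Y` in which `Z` multiplies on the left through `α` and `Y`
multiplies the second factor on the right. The orbit map of `1` is the left Galois map. -/
def galoisAction (α : Z →ₐ[R] A ⊗[R] Y) : Z ⊗[R] Yᵐᵒᵖ →ₐ[R] Module.End R (A ⊗[R] Y) :=
  (AlgHom.mulLeftRight R (A ⊗[R] Y)).comp (map α (AlgHom.op includeRight))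

theorem galoisAction_tmul_apply (α : Z →ₐ[R] A ⊗[R] Y) (z : Z) (y : Yᵐᵒᵖ) (t : A ⊗[R] Y) :
    galoisAction α (z ⊗ₜ y) t = α z * t * 1 ⊗ₜ y.unop := by
  simp [galoisAction]

/-- The right action of `A ⊗ Y` on `Z ⊗ Yᵐᵒᵖ` in which `A` multiplies on the right through `β` and
`Y` multiplies the second factor on the right (that is, on the left in `Yᵐᵒᵖ`). The orbit map
of `1` is the inverse of the left Galois map. -/
def galoisInvAction (β : A →ₐ[R] Z ⊗[R] Yᵐᵒᵖ) :
    A ⊗[R] Y →ₐ[R] (Module.End R (Z ⊗[R] Yᵐᵒᵖ))ᵐᵒᵖ :=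
  lift (AlgHom.opComm.symm ((Algebra.lsmul R R (Z ⊗[R] Yᵐᵒᵖ)).comp (AlgHom.op β)))
    (AlgHom.opComm.symm ((Algebra.lmul R (Z ⊗[R] Yᵐᵒᵖ)).comp includeRight))
    fun a y => (commute_iff_eq _ _).2 <| unop_injective <| LinearMap.ext fun t => by
      simp [mul_assoc]

theorem galoisInvAction_tmul_apply (β : A →ₐ[R] Z ⊗[R] Yᵐᵒᵖ) (a : A) (y : Y)
    (t : Z ⊗[R] Yᵐᵒᵖ) :
    (galoisInvAction β (a ⊗ₜ y)).unop t = 1 ⊗ₜ op y * t * β a := by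
  simp [galoisInvAction, mul_assoc]

theorem galoisAction_comp_apply_tmul_one {α : Z →ₐ[R] A ⊗[R] Y} {β : A →ₐ[R] Z ⊗[R] Yᵐᵒᵖ}
    {s : Set A} (hs : Algebra.adjoin R s = ⊤)
    (h : ∀ a ∈ s, ∀ b, galoisAction α (β a) (b ⊗ₜ 1) = (a * b) ⊗ₜ 1) (a b : A) :
    galoisAction α (β a) (b ⊗ₜ 1) = (a * b) ⊗ₜ 1 := by
  have ha : a ∈ Algebra.adjoin R s := hs ▸ Algebra.mem_top
  induction ha using Algebra.adjoin_induction generalizing b with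
  | mem a ha => exact h a ha b
  | algebraMap r => simp [Algebra.algebraMap_eq_smul_one, TensorProduct.smul_tmul']
  | add a a' _ _ iha iha' => simp [iha, iha', add_mul, TensorProduct.add_tmul]
  | mul a a' _ _ iha iha' => simp [iha, iha', mul_assoc]

theorem galoisInvAction_comp_apply_tmul_one {α : Z →ₐ[R] A ⊗[R] Y} {β : A →ₐ[R] Z ⊗[R] Yᵐᵒᵖ}
    {s : Set Z} (hs : Algebra.adjoin R s = ⊤)
    (h : ∀ z ∈ s, ∀ x, (galoisInvAction β (α z)).unop (x ⊗ₜ 1) = (x * z) ⊗ₜ 1) (z x : Z) :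
    (galoisInvAction β (α z)).unop (x ⊗ₜ 1) = (x * z) ⊗ₜ 1 := by
  have hz : z ∈ Algebra.adjoin R s := hs ▸ Algebra.mem_top
  induction hz using Algebra.adjoin_induction generalizing x with
  | mem z hz => exact h z hz x
  | algebraMap r => simp [Algebra.algebraMap_eq_smul_one, TensorProduct.smul_tmul']
  | add z z' _ _ ihz ihz' => simp [ihz, ihz', mul_add, TensorProduct.add_tmul]
  | mul z z' _ _ ihz ihz' => simp [ihz, ihz', mul_assoc]

theorem leftGaloisMap_bijective {α : Z →ₐ[R] A ⊗[R] Y} {β : A →ₐ[R] Z ⊗[R] Yᵐᵒᵖ}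
    (hβα : ∀ a, galoisAction α (β a) 1 = a ⊗ₜ 1)
    (hαβ : ∀ z, (galoisInvAction β (α z)).unop 1 = z ⊗ₜ 1) :
    Function.Bijective (leftGaloisMap α) := by
  let forgetOp : Z ⊗[R] Yᵐᵒᵖ →ₗ[R] Z ⊗[R] Y :=
    LinearMap.lTensor Z (opLinearEquiv R).symm.toLinearMap
  let orbit : A ⊗[R] Y →ₗ[R] Z ⊗[R] Yᵐᵒᵖ := LinearMap.applyₗ 1 ∘ₗ
    (opLinearEquiv R).symm.toLinearMap ∘ₗ (galoisInvAction β).toLinearMap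
  have orbit_apply (t) : orbit t = (galoisInvAction β t).unop 1 := rfl
  have galois_forgetOp (t) : leftGaloisMap α (forgetOp t) = galoisAction α t 1 := by
    induction t using TensorProduct.induction_on with
    | zero => simp
    | tmul z y => simp [forgetOp, leftGaloisMap_tmul, galoisAction_tmul_apply]
    | add s t hs ht => simp [hs, ht]
  have right_inv : leftGaloisMap α ∘ₗ forgetOp ∘ₗ orbit = LinearMap.id :=
    TensorProduct.ext' fun a y => calc
      leftGaloisMap α (forgetOp (orbit (a ⊗ₜ y)))
        = galoisAction α (1 ⊗ₜ op y) (galoisAction α (β a) 1) := by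
          rw [galois_forgetOp, orbit_apply, galoisInvAction_tmul_apply, mul_one, map_mul,
            Module.End.mul_apply]
      _ = a ⊗ₜ y := by simp [hβα, galoisAction_tmul_apply]
  have left_inv : (forgetOp ∘ₗ orbit) ∘ₗ leftGaloisMap α = LinearMap.id :=
    TensorProduct.ext' fun z y => calc
      forgetOp (orbit (leftGaloisMap α (z ⊗ₜ y)))
        = forgetOp ((galoisInvAction β (1 ⊗ₜ y)).unop ((galoisInvAction β (α z)).unop 1)) := by
          rw [leftGaloisMap_tmul, orbit_apply, map_mul, unop_mul, Module.End.mul_apply]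
      _ = z ⊗ₜ y := by simp [hαβ, galoisInvAction_tmul_apply, forgetOp]
  exact Function.bijective_iff_has_inverse.2
    ⟨forgetOp ∘ₗ orbit, LinearMap.congr_fun left_inv, LinearMap.congr_fun right_inv⟩

theorem leftGaloisMap_bijective_of_matrix {l m n : Type*} [Fintype m] [DecidableEq m] [Fintype n]
    [DecidableEq n] {α : Z →ₐ[R] A ⊗[R] Y} {β : A →ₐ[R] Z ⊗[R] Yᵐᵒᵖ}
    {a : Matrix l m A} {z : Matrix l n Z} {y : Matrix m n Y} {w : Matrix n m Y}
    (ha : Algebra.adjoin R (Set.range fun p : l × m => a p.1 p.2) = ⊤)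
    (hz : Algebra.adjoin R (Set.range fun p : l × n => z p.1 p.2) = ⊤)
    (hyw : y * w = 1) (hwy : w * y = 1)
    (hα : ∀ i j, α (z i j) = ∑ p, a i p ⊗ₜ y p j)
    (hβ : ∀ i j, β (a i j) = ∑ p, z i p ⊗ₜ op (w p j)) :
    Function.Bijective (leftGaloisMap α) := by
  have hβα : ∀ b c, galoisAction α (β b) (c ⊗ₜ 1) = (b * c) ⊗ₜ 1 := by
    refine galoisAction_comp_apply_tmul_one ha ?_
    rintro _ ⟨⟨i, j⟩, rfl⟩ c
    calc galoisAction α (β (a i j)) (c ⊗ₜ 1)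
        = ∑ q, ∑ p, (a i p * c) ⊗ₜ (y p q * w q j) := by
          simp [hβ, hα, galoisAction_tmul_apply, Finset.sum_mul]
      _ = ∑ p, (a i p * c) ⊗ₜ (y * w) p j := by
          simp only [Matrix.mul_apply, TensorProduct.tmul_sum]
          exact Finset.sum_comm
      _ = (a i j * c) ⊗ₜ 1 := by simp [hyw, Matrix.one_apply, TensorProduct.tmul_ite]
  have hαβ : ∀ x c, (galoisInvAction β (α x)).unop (c ⊗ₜ 1) = (c * x) ⊗ₜ 1 := by
    refine galoisInvAction_comp_apply_tmul_one hz ?_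
    rintro _ ⟨⟨i, j⟩, rfl⟩ c
    calc (galoisInvAction β (α (z i j))).unop (c ⊗ₜ 1)
        = ∑ q, ∑ p, (c * z i p) ⊗ₜ op (w p q * y q j) := by
          simp [hβ, hα, galoisInvAction_tmul_apply, Finset.mul_sum, Finset.unop_sum]
      _ = ∑ p, (c * z i p) ⊗ₜ op ((w * y) p j) := by
          simp only [Matrix.mul_apply, Finset.op_sum, TensorProduct.tmul_sum]
          exact Finset.sum_comm
      _ = (c * z i j) ⊗ₜ 1 := by
          simp [hwy, Matrix.one_apply, apply_ite op, TensorProduct.tmul_ite]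
  exact leftGaloisMap_bijective (fun b => by simpa [one_def] using hβα b 1)
    fun x => by simpa [one_def] using hαβ x 1

end GaloisMap

section BBMatrix

variable {k} {A B : Type} [Semiring A] [Algebra k A] [Semiring B] [Algebra k B] {l m n : ℕ}

theorem liftMat_map (f : A →ₐ[k] B) (M : Matrix (Fin m) (Fin n) k) :
    (liftMat k M : Matrix _ _ A).map f = liftMat k M := by
  ext i j
  simp [liftMat]

theorem liftMat_mul_liftMat_inv {E : Matrix (Fin m) (Fin m) k} (hE : IsUnit E.det) :
    liftMat k E * liftMat k E⁻¹ = (1 : Matrix (Fin m) (Fin m) A) := by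
  simp [liftMat, ← Matrix.map_mul, Matrix.mul_nonsing_inv E hE]

theorem liftMat_inv_mul_liftMat {E : Matrix (Fin m) (Fin m) k} (hE : IsUnit E.det) :
    liftMat k E⁻¹ * liftMat k E = (1 : Matrix (Fin m) (Fin m) A) := by
  simp [liftMat, ← Matrix.map_mul, Matrix.nonsing_inv_mul E hE]

/-- The matrix `F⁻¹ ᵀX E`, which the relations of `B(E,F)` require to be inverse to `X`. -/
def bbInv (E : Matrix (Fin m) (Fin m) k) (F : Matrix (Fin n) (Fin n) k)
    (X : Matrix (Fin m) (Fin n) A) : Matrix (Fin n) (Fin m) A :=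
  liftMat k (A := A) F⁻¹ * Xᵀ * liftMat k (A := A) E

/-- The defining relations of `B(E,F)` for a matrix `X` over a `k`-algebra `A`, so that such
matrices correspond to the algebra homomorphisms `B(E,F) → A`. -/
structure IsBBMatrix (E : Matrix (Fin m) (Fin m) k) (F : Matrix (Fin n) (Fin n) k)
    (X : Matrix (Fin m) (Fin n) A) : Prop where
  bbInv_mul : bbInv E F X * X = 1
  mul_bbInv : X * bbInv E F X = 1

variable {E : Matrix (Fin l) (Fin l) k} {F : Matrix (Fin m) (Fin m) k}
  {G : Matrix (Fin n) (Fin n) k}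

theorem liftMat_mul_bbInv (hF : IsUnit F.det) (X : Matrix (Fin l) (Fin m) A) :
    liftMat k (A := A) F * bbInv E F X = Xᵀ * liftMat k (A := A) E := by
  rw [bbInv, Matrix.mul_assoc, ← Matrix.mul_assoc, liftMat_mul_liftMat_inv hF, Matrix.one_mul]

theorem bbInv_mul_liftMat_inv (hE : IsUnit E.det) (X : Matrix (Fin l) (Fin m) A) :
    bbInv E F X * liftMat k (A := A) E⁻¹ = liftMat k (A := A) F⁻¹ * Xᵀ := by
  rw [bbInv, Matrix.mul_assoc, liftMat_mul_liftMat_inv hE, Matrix.mul_one]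

theorem bbInv_map (f : A →ₐ[k] B) (X : Matrix (Fin l) (Fin m) A) :
    (bbInv E F X).map f = bbInv E F (X.map f) := by
  simp only [bbInv, Matrix.map_mul, liftMat_map, Matrix.transpose_map]

theorem bbInv_map_op (X : Matrix (Fin l) (Fin m) A) :
    (bbInv E F X).map MulOpposite.op = bbInv E F (X.map MulOpposite.op) := by
  ext i j
  simp only [bbInv, liftMat, Matrix.map_apply, Matrix.mul_apply, Matrix.transpose_apply,
    Finset.op_sum, MulOpposite.op_mul, Finset.sum_mul, ← MulOpposite.algebraMap_apply]
  refine Finset.sum_congr rfl fun p _ => Finset.sum_congr rfl fun q _ => ?_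
  rw [Algebra.commutes (E p j), ← Algebra.commutes (F⁻¹ i q)]

theorem bbInv_mul_of_commute (hF : IsUnit F.det) {X : Matrix (Fin l) (Fin m) A}
    {Y : Matrix (Fin m) (Fin n) A} (hXY : ∀ i j p q, Commute (X i j) (Y p q)) :
    bbInv E G (X * Y) = bbInv F G Y * bbInv E F X := by
  calc bbInv E G (X * Y)
      = liftMat k (A := A) G⁻¹ * Yᵀ * (Xᵀ * liftMat k (A := A) E) := by
        simp only [bbInv, transpose_mul_of_commute hXY, Matrix.mul_assoc]
    _ = bbInv F G Y * bbInv E F X := by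
        rw [← liftMat_mul_bbInv hF, ← Matrix.mul_assoc, ← bbInv]

namespace IsBBMatrix

theorem map {X : Matrix (Fin l) (Fin m) A} (hX : IsBBMatrix E F X) (f : A →ₐ[k] B) :
    IsBBMatrix E F (X.map f) where
  bbInv_mul := by
    rw [← bbInv_map, ← Matrix.map_mul, hX.bbInv_mul, Matrix.map_one _ (map_zero f) (map_one f)]
  mul_bbInv := by
    rw [← bbInv_map, ← Matrix.map_mul, hX.mul_bbInv, Matrix.map_one _ (map_zero f) (map_one f)]

theorem mul (hF : IsUnit F.det) {X : Matrix (Fin l) (Fin m) A} {Y : Matrix (Fin m) (Fin n) A}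
    (hX : IsBBMatrix E F X) (hY : IsBBMatrix F G Y)
    (hXY : ∀ i j p q, Commute (X i j) (Y p q)) : IsBBMatrix E G (X * Y) where
  bbInv_mul := by
    rw [bbInv_mul_of_commute hF hXY, Matrix.mul_assoc, ← Matrix.mul_assoc _ X, hX.bbInv_mul,
      Matrix.one_mul, hY.bbInv_mul]
  mul_bbInv := by
    rw [bbInv_mul_of_commute hF hXY, Matrix.mul_assoc, ← Matrix.mul_assoc Y, hY.mul_bbInv,
      Matrix.one_mul, hX.mul_bbInv]

theorem bbInv_op (hE : IsUnit E.det) (hF : IsUnit F.det) {X : Matrix (Fin l) (Fin m) A}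
    (hX : IsBBMatrix E F X) : IsBBMatrix F E ((bbInv E F X).map MulOpposite.op) := by
  set V := X.map MulOpposite.op with hV
  set W := (bbInv E F X).map MulOpposite.op with hW
  have W_eq : W = bbInv E F V := bbInv_map_op X
  have hWV : Wᵀ * Vᵀ = 1 := by
    rw [hW, hV, ← transpose_map_op_mul, hX.mul_bbInv]
    simp
  have hVW : Vᵀ * Wᵀ = 1 := by
    rw [hW, hV, ← transpose_map_op_mul, hX.bbInv_mul]
    simp
  constructor
  · calc bbInv F E W * W
        = liftMat k (A := Aᵐᵒᵖ) E⁻¹ * (Wᵀ * (liftMat k (A := Aᵐᵒᵖ) F * W)) := by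
          simp only [bbInv, Matrix.mul_assoc]
      _ = liftMat k (A := Aᵐᵒᵖ) E⁻¹ * (Wᵀ * Vᵀ * liftMat k (A := Aᵐᵒᵖ) E) := by
          rw [Matrix.mul_assoc Wᵀ, W_eq, liftMat_mul_bbInv hF]
      _ = 1 := by rw [hWV, Matrix.one_mul, liftMat_inv_mul_liftMat hE]
  · calc W * bbInv F E W
        = W * liftMat k (A := Aᵐᵒᵖ) E⁻¹ * Wᵀ * liftMat k (A := Aᵐᵒᵖ) F := by
          simp only [bbInv, Matrix.mul_assoc]
      _ = liftMat k (A := Aᵐᵒᵖ) F⁻¹ * (Vᵀ * Wᵀ) * liftMat k (A := Aᵐᵒᵖ) F := by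
          rw [← Matrix.mul_assoc _ Vᵀ, W_eq, bbInv_mul_liftMat_inv hE]
      _ = 1 := by rw [hVW, Matrix.mul_one, liftMat_inv_mul_liftMat hF]

end IsBBMatrix

theorem isBBMatrix_ZMat : IsBBMatrix E F (ZMat k E F) := by
  let π := RingQuot.mkAlgHom k (BRel k E F)
  have ZMat_eq : ZMat k E F = (gens k l m).map π := rfl
  rw [ZMat_eq]
  constructor
  · rw [← bbInv_map, ← Matrix.map_mul, ← Matrix.map_one _ (map_zero π) (map_one π)]
    ext i j
    exact RingQuot.mkAlgHom_rel k (BRel.left i j)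
  · rw [← bbInv_map, ← Matrix.map_mul, bbInv, ← Matrix.mul_assoc, ← Matrix.mul_assoc,
      ← Matrix.map_one _ (map_zero π) (map_one π)]
    ext i j
    exact RingQuot.mkAlgHom_rel k (BRel.right i j)

theorem adjoin_range_ZMat :
    Algebra.adjoin k (Set.range fun p : Fin l × Fin m => ZMat k E F p.1 p.2) = ⊤ := by
  let π := RingQuot.mkAlgHom k (BRel k E F)
  have range_eq : (Set.range fun p : Fin l × Fin m => ZMat k E F p.1 p.2) =
      π '' Set.range (FreeAlgebra.ι k) := Set.range_comp π (FreeAlgebra.ι k)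
  rw [range_eq, Algebra.adjoin_image, FreeAlgebra.adjoin_range_ι, Algebra.map_top,
    AlgHom.range_eq_top]
  exact RingQuot.mkAlgHom_surjective k (BRel k E F)

theorem IsBBMatrix.exists_algHom {X : Matrix (Fin l) (Fin m) A} (hX : IsBBMatrix E F X) :
    ∃ f : BB k E F →ₐ[k] A, ∀ i j, f (ZMat k E F i j) = X i j := by
  let φ : FreeAlgebra k (Fin l × Fin m) →ₐ[k] A := FreeAlgebra.lift k fun p => X p.1 p.2
  have φ_gens : (gens k l m).map φ = X := by
    ext i j
    simp [gens, φ]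
  have φ_bbInv : (bbInv E F (gens k l m)).map φ = bbInv E F X := by rw [bbInv_map, φ_gens]
  have φ_rel : ∀ ⦃x y⦄, BRel k E F x y → φ x = φ y := by
    rintro _ _ (⟨i, j⟩ | ⟨i, j⟩)
    · have h : (bbInv E F (gens k l m) * gens k l m).map φ = Matrix.map 1 φ := by
        rw [Matrix.map_mul, φ_gens, φ_bbInv, hX.bbInv_mul,
          Matrix.map_one _ (map_zero φ) (map_one φ)]
      exact congrFun₂ h i j
    · have h : (gens k l m * bbInv E F (gens k l m)).map φ = Matrix.map 1 φ := by
        rw [Matrix.map_mul, φ_gens, φ_bbInv, hX.mul_bbInv,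
          Matrix.map_one _ (map_zero φ) (map_one φ)]
      rw [bbInv, ← Matrix.mul_assoc, ← Matrix.mul_assoc] at h
      exact congrFun₂ h i j
  refine ⟨RingQuot.liftAlgHom k ⟨φ, φ_rel⟩, fun i j => ?_⟩
  calc RingQuot.liftAlgHom k ⟨φ, φ_rel⟩ (ZMat k E F i j)
      = φ (gens k l m i j) := RingQuot.liftAlgHom_mkAlgHom_apply _ _ _ _
    _ = X i j := congrFun₂ φ_gens i j

theorem exists_algHom_tmul_op_bbInv (hF : IsUnit F.det) (hG : IsUnit G.det) :
    ∃ β : BB k E G →ₐ[k] BB k E F ⊗[k] (BB k G F)ᵐᵒᵖ, ∀ i j, β (ZMat k E G i j) =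
      ∑ p, ZMat k E F i p ⊗ₜ MulOpposite.op (bbInv G F (ZMat k G F) p j) := by
  let ιL : BB k E F →ₐ[k] BB k E F ⊗[k] (BB k G F)ᵐᵒᵖ := Algebra.TensorProduct.includeLeft
  let ιR : (BB k G F)ᵐᵒᵖ →ₐ[k] BB k E F ⊗[k] (BB k G F)ᵐᵒᵖ := Algebra.TensorProduct.includeRight
  have hZW := (isBBMatrix_ZMat.map ιL).mul hF ((isBBMatrix_ZMat.bbInv_op hG hF).map ιR)
    fun i j p q => by simp [ιL, ιR, commute_iff_eq]
  obtain ⟨β, hβ⟩ := hZW.exists_algHom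
  exact ⟨β, fun i j => by simp [hβ, Matrix.mul_apply, ιL, ιR]⟩

end BBMatrix

theorem BB_left_galois_bijective_general {l m n : ℕ} (E : Matrix (Fin l) (Fin l) k)
    (F : Matrix (Fin m) (Fin m) k) (G : Matrix (Fin n) (Fin n) k)
    (hF : IsUnit F.det) (hG : IsUnit G.det) (α : BB k E F →ₐ[k] BB k E G ⊗[k] BB k G F)
    (hα : ∀ i j, α (ZMat k E F i j) = ∑ p, ZMat k E G i p ⊗ₜ[k] ZMat k G F p j) :
    Function.Bijective (leftGaloisMap α) := by
  obtain ⟨β, hβ⟩ := exists_algHom_tmul_op_bbInv (E := E) hF hG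
  exact leftGaloisMap_bijective_of_matrix adjoin_range_ZMat adjoin_range_ZMat
    isBBMatrix_ZMat.mul_bbInv isBBMatrix_ZMat.bbInv_mul hα hβ

/-- **Statement 8.** If `B(E,F) ≠ 0` then the left Galois map
`κₗ = (id ⊗ m) ∘ (α ⊗ id) : B(E,F) ⊗ B(E,F) → B(E) ⊗ B(E,F)` is bijective, where
`α` is the unique algebra homomorphism with `α(z i j) = ∑ l, a i l ⊗ z l j`. -/
theorem BB_left_galois_bijective {m n : ℕ}
    (E : Matrix (Fin m) (Fin m) k) (F : Matrix (Fin n) (Fin n) k)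
    (hE : IsUnit E.det) (hF : IsUnit F.det)
    (hnz : (1 : BB k E F) ≠ 0)
    (α : BB k E F →ₐ[k] (BB k E E ⊗[k] BB k E F))
    (hα : ∀ i j, α (ZMat k E F i j) = ∑ l, ZMat k E E i l ⊗ₜ[k] ZMat k E F l j) :
    Function.Bijective
      ((LinearMap.lTensor (BB k E E) (LinearMap.mul' k (BB k E F))) ∘ₗ
        (TensorProduct.assoc k (BB k E E) (BB k E F) (BB k E F)).toLinearMap ∘ₗ
        (LinearMap.rTensor (BB k E F) α.toLinearMap) :
        (BB k E F ⊗[k] BB k E F) →ₗ[k] (BB k E E ⊗[k] BB k E F)) := by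
  exact BB_left_galois_bijective_general k E F E hF hE α hα
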